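/- arXiv:1204.4794 — 2 statements merged into one kernel-verified Lean document; each statement's English description precedes it below -/
import Mathlib

section
/- Let U ⊆ ℝ² be open, and let f₁, f₂, θ₁, θ₂, Ψ : U → ℝ be smooth with f₁, f₂ nowhere zero. Set ξᵢ(g) = (1/fᵢ)∂ᵢg, b = -θ₁θ₂ + ξ₂(θ₁), c = θ₁θ₂ + ξ₁(θ₂), and assume the four structural equations hold on U: (E1) ∂₂f₁ + (1/2)f₁f₂θ₂ = 0; (E2) ∂₁f₂ - (1/2)f₁f₂θ₁ = 0; (E3) f₁∂₂Ψ - f₂∂₁c - f₁f₂(cθ₁ + θ₂(Ψ+2)) = 0; (E4) -f₁∂₂b + f₂∂₁Ψ + f₁f₂(bθ₂ + θ₁(Ψ-2)) = 0. Then on U: (ξ₁(θ₂) + ξ₂(θ₁))·Ψ = -6θ₁θ₂ + (3/2)(bθ₂² - cθ₁²) - (5/2)(θ₂ξ₂(b) + θ₁ξ₁(c)) + 2(ξ₂(θ₁) - ξ₁(θ₂)) + ξ₂(ξ₂(b)) - ξ₁(ξ₁(c)) - c·ξ₁(θ₁) - b·ξ₂(θ₂). -/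
open scoped Topology

/-- Partial derivative in the first coordinate. -/
noncomputable def pd1 (g : ℝ × ℝ → ℝ) (p : ℝ × ℝ) : ℝ := fderiv ℝ g p (1, 0)

/-- Partial derivative in the second coordinate. -/
noncomputable def pd2 (g : ℝ × ℝ → ℝ) (p : ℝ × ℝ) : ℝ := fderiv ℝ g p (0, 1)

/-- The first-order differential operator ξ₁(g) = (1/f₁)∂₁g. -/
noncomputable def xi1 (f₁ g : ℝ × ℝ → ℝ) : ℝ × ℝ → ℝ := fun p => (1 / f₁ p) * pd1 g p

/-- The first-order differential operator ξ₂(g) = (1/f₂)∂₂g. -/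
noncomputable def xi2 (f₂ g : ℝ × ℝ → ℝ) : ℝ × ℝ → ℝ := fun p => (1 / f₂ p) * pd2 g p

/-- b = -θ₁θ₂ + ξ₂(θ₁) -/
noncomputable def bfun (f₂ θ₁ θ₂ : ℝ × ℝ → ℝ) : ℝ × ℝ → ℝ :=
  fun p => -θ₁ p * θ₂ p + xi2 f₂ θ₁ p

/-- c = θ₁θ₂ + ξ₁(θ₂) -/
noncomputable def cfun (f₁ θ₁ θ₂ : ℝ × ℝ → ℝ) : ℝ × ℝ → ℝ :=
  fun p => θ₁ p * θ₂ p + xi1 f₁ θ₂ p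

theorem contDiffOn_fderiv_apply {U : Set (ℝ × ℝ)} (hU : IsOpen U) {g : ℝ × ℝ → ℝ}
    (hg : ContDiffOn ℝ (⊤ : ℕ∞) g U) (v : ℝ × ℝ) :
    ContDiffOn ℝ (⊤ : ℕ∞) (fun p => fderiv ℝ g p v) U :=
  (hg.fderiv_of_isOpen hU (by simp)).clm_apply contDiffOn_const

theorem contDiffOn_xi1 {U : Set (ℝ × ℝ)} (hU : IsOpen U) {f g : ℝ × ℝ → ℝ}
    (hf : ContDiffOn ℝ (⊤ : ℕ∞) f U) (hf0 : ∀ p ∈ U, f p ≠ 0)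
    (hg : ContDiffOn ℝ (⊤ : ℕ∞) g U) : ContDiffOn ℝ (⊤ : ℕ∞) (xi1 f g) U :=
  (contDiffOn_const.div hf hf0).mul (contDiffOn_fderiv_apply hU hg (1, 0))

theorem contDiffOn_xi2 {U : Set (ℝ × ℝ)} (hU : IsOpen U) {f g : ℝ × ℝ → ℝ}
    (hf : ContDiffOn ℝ (⊤ : ℕ∞) f U) (hf0 : ∀ p ∈ U, f p ≠ 0)
    (hg : ContDiffOn ℝ (⊤ : ℕ∞) g U) : ContDiffOn ℝ (⊤ : ℕ∞) (xi2 f g) U :=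
  (contDiffOn_const.div hf hf0).mul (contDiffOn_fderiv_apply hU hg (0, 1))

theorem ContDiffOn.differentiableAt_of_mem {U : Set (ℝ × ℝ)} (hU : IsOpen U) {g : ℝ × ℝ → ℝ}
    (hg : ContDiffOn ℝ (⊤ : ℕ∞) g U) {p : ℝ × ℝ} (hp : p ∈ U) : DifferentiableAt ℝ g p :=
  (hg.contDiffAt (hU.mem_nhds hp)).differentiableAt (by simp)

/-- Partial derivatives of a smooth function commute. -/
theorem pd1_pd2_comm {U : Set (ℝ × ℝ)} (hU : IsOpen U) {g : ℝ × ℝ → ℝ}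
    (hg : ContDiffOn ℝ (⊤ : ℕ∞) g U) {p : ℝ × ℝ} (hp : p ∈ U) :
    pd1 (pd2 g) p = pd2 (pd1 g) p := by
  have hd : DifferentiableAt ℝ (fderiv ℝ g) p :=
    ((hg.fderiv_of_isOpen (m := (⊤ : ℕ∞)) hU (by simp)).contDiffAt
      (hU.mem_nhds hp)).differentiableAt (by simp)
  have happly (v w : ℝ × ℝ) :
      fderiv ℝ (fun q => fderiv ℝ g q v) p w = fderiv ℝ (fderiv ℝ g) p w v := by
    rw [fderiv_clm_apply hd (differentiableAt_const v)]
    simp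
  have hsymm : IsSymmSndFDerivAt ℝ g p :=
    (hg.contDiffAt (hU.mem_nhds hp)).isSymmSndFDerivAt (by
      rw [minSmoothness_of_isRCLikeNormedField]; exact WithTop.coe_le_coe.2 (le_top (a := (2 : ℕ∞))))
  change fderiv ℝ (fun q => fderiv ℝ g q (0, 1)) p (1, 0)
    = fderiv ℝ (fun q => fderiv ℝ g q (1, 0)) p (0, 1)
  rw [happly, happly]
  exact hsymm _ _

theorem fderiv_one_div_mul_apply {f g : ℝ × ℝ → ℝ} {p : ℝ × ℝ}
    (hf : DifferentiableAt ℝ f p) (hf0 : f p ≠ 0) (hg : DifferentiableAt ℝ g p) (v : ℝ × ℝ) :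
    fderiv ℝ (fun q => (1 / f q) * g q) p v
      = (1 / f p) * fderiv ℝ g p v - g p * fderiv ℝ f p v / f p ^ 2 := by
  have h := (((hasDerivAt_inv hf0).comp_hasFDerivAt p hf.hasFDerivAt).fun_mul hg.hasFDerivAt).fderiv
  simp only [Function.comp_def] at h
  simp only [one_div, h]
  simp
  ring

/-- The commutator `[ξ₁, ξ₂] = -(θ₁ξ₂ + θ₂ξ₁)/2` encoded by the first two structural equations. -/
theorem xi1_xi2_sub_xi2_xi1 {U : Set (ℝ × ℝ)} (hU : IsOpen U) {f₁ f₂ g : ℝ × ℝ → ℝ}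
    (hf₁ : ContDiffOn ℝ (⊤ : ℕ∞) f₁ U) (hf₂ : ContDiffOn ℝ (⊤ : ℕ∞) f₂ U)
    (hg : ContDiffOn ℝ (⊤ : ℕ∞) g U) {p : ℝ × ℝ} (hp : p ∈ U)
    (hf₁0 : f₁ p ≠ 0) (hf₂0 : f₂ p ≠ 0) {t₁ t₂ : ℝ}
    (hE1 : pd2 f₁ p + (1 / 2) * f₁ p * f₂ p * t₂ = 0)
    (hE2 : pd1 f₂ p - (1 / 2) * f₁ p * f₂ p * t₁ = 0) :
    xi1 f₁ (xi2 f₂ g) p - xi2 f₂ (xi1 f₁ g) p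
      = -(1 / 2) * (t₁ * xi2 f₂ g p + t₂ * xi1 f₁ g p) := by
  have h12 : pd1 (xi2 f₂ g) p = (1 / f₂ p) * pd1 (pd2 g) p - pd2 g p * pd1 f₂ p / f₂ p ^ 2 :=
    fderiv_one_div_mul_apply (hf₂.differentiableAt_of_mem hU hp) hf₂0
      ((contDiffOn_fderiv_apply hU hg (0, 1)).differentiableAt_of_mem hU hp) (1, 0)
  have h21 : pd2 (xi1 f₁ g) p = (1 / f₁ p) * pd2 (pd1 g) p - pd1 g p * pd2 f₁ p / f₁ p ^ 2 :=
    fderiv_one_div_mul_apply (hf₁.differentiableAt_of_mem hU hp) hf₁0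
      ((contDiffOn_fderiv_apply hU hg (1, 0)).differentiableAt_of_mem hU hp) (0, 1)
  have e1 : pd2 f₁ p = -((1 / 2) * f₁ p * f₂ p * t₂) := by linarith
  have e2 : pd1 f₂ p = (1 / 2) * f₁ p * f₂ p * t₁ := by linarith
  change (1 / f₁ p) * pd1 (xi2 f₂ g) p - (1 / f₂ p) * pd2 (xi1 f₁ g) p
    = -(1 / 2) * (t₁ * ((1 / f₂ p) * pd2 g p) + t₂ * ((1 / f₁ p) * pd1 g p))
  rw [h12, h21, pd1_pd2_comm hU hg hp, e1, e2]
  field_simp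
  ring

/-- The derivative of the right-hand side common to the last two structural equations. -/
theorem fderiv_add_mul_add_mul_add_apply {a c s t P : ℝ × ℝ → ℝ} {p : ℝ × ℝ}
    (ha : DifferentiableAt ℝ a p) (hc : DifferentiableAt ℝ c p) (hs : DifferentiableAt ℝ s p)
    (ht : DifferentiableAt ℝ t p) (hP : DifferentiableAt ℝ P p) (k : ℝ) (v : ℝ × ℝ) :
    fderiv ℝ (fun q => a q + (c q * s q + t q * (P q + k))) p v
      = fderiv ℝ a p v + (c p * fderiv ℝ s p v + s p * fderiv ℝ c p v)
        + (t p * fderiv ℝ P p v + (P p + k) * fderiv ℝ t p v) := by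
  have h := (ha.hasFDerivAt.fun_add ((hc.hasFDerivAt.fun_mul hs.hasFDerivAt).fun_add
    (ht.hasFDerivAt.fun_mul (hP.hasFDerivAt.add_const k)))).fderiv
  rw [h]
  simp
  ring

/-- Under the structural equations (E1)–(E4), one has
`(ξ₁(θ₂) + ξ₂(θ₁))·Ψ = -6θ₁θ₂ + (3/2)(bθ₂² - cθ₁²) - (5/2)(θ₂ξ₂(b) + θ₁ξ₁(c))
  + 2(ξ₂(θ₁) - ξ₁(θ₂)) + ξ₂²(b) - ξ₁²(c) - c·ξ₁(θ₁) - b·ξ₂(θ₂)` on U. -/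
theorem psi_times_sum_xi_theta
    (U : Set (ℝ × ℝ)) (hU : IsOpen U)
    (f₁ f₂ θ₁ θ₂ Ψ : ℝ × ℝ → ℝ)
    (hf₁ : ContDiffOn ℝ (⊤ : ℕ∞) f₁ U) (hf₂ : ContDiffOn ℝ (⊤ : ℕ∞) f₂ U)
    (hθ₁ : ContDiffOn ℝ (⊤ : ℕ∞) θ₁ U) (hθ₂ : ContDiffOn ℝ (⊤ : ℕ∞) θ₂ U)
    (hΨ : ContDiffOn ℝ (⊤ : ℕ∞) Ψ U)
    (hf₁0 : ∀ p ∈ U, f₁ p ≠ 0) (hf₂0 : ∀ p ∈ U, f₂ p ≠ 0)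
    (hE1 : ∀ p ∈ U, pd2 f₁ p + (1 / 2) * f₁ p * f₂ p * θ₂ p = 0)
    (hE2 : ∀ p ∈ U, pd1 f₂ p - (1 / 2) * f₁ p * f₂ p * θ₁ p = 0)
    (hE3 : ∀ p ∈ U, f₁ p * pd2 Ψ p - f₂ p * pd1 (cfun f₁ θ₁ θ₂) p
      - f₁ p * f₂ p * (cfun f₁ θ₁ θ₂ p * θ₁ p + θ₂ p * (Ψ p + 2)) = 0)
    (hE4 : ∀ p ∈ U, -(f₁ p) * pd2 (bfun f₂ θ₁ θ₂) p + f₂ p * pd1 Ψ p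
      + f₁ p * f₂ p * (bfun f₂ θ₁ θ₂ p * θ₂ p + θ₁ p * (Ψ p - 2)) = 0) :
    ∀ p ∈ U,
      (xi1 f₁ θ₂ p + xi2 f₂ θ₁ p) * Ψ p
        = -6 * θ₁ p * θ₂ p
          + (3 / 2) * (bfun f₂ θ₁ θ₂ p * (θ₂ p) ^ 2 - cfun f₁ θ₁ θ₂ p * (θ₁ p) ^ 2)
          - (5 / 2) * (θ₂ p * xi2 f₂ (bfun f₂ θ₁ θ₂) p + θ₁ p * xi1 f₁ (cfun f₁ θ₁ θ₂) p)
          + 2 * (xi2 f₂ θ₁ p - xi1 f₁ θ₂ p)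
          + xi2 f₂ (xi2 f₂ (bfun f₂ θ₁ θ₂)) p - xi1 f₁ (xi1 f₁ (cfun f₁ θ₁ θ₂)) p
          - cfun f₁ θ₁ θ₂ p * xi1 f₁ θ₁ p - bfun f₂ θ₁ θ₂ p * xi2 f₂ θ₂ p := by
  have hb : ContDiffOn ℝ (⊤ : ℕ∞) (bfun f₂ θ₁ θ₂) U :=
    (hθ₁.neg.mul hθ₂).add (contDiffOn_xi2 hU hf₂ hf₂0 hθ₁)
  have hc : ContDiffOn ℝ (⊤ : ℕ∞) (cfun f₁ θ₁ θ₂) U :=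
    (hθ₁.mul hθ₂).add (contDiffOn_xi1 hU hf₁ hf₁0 hθ₂)
  have hξb := contDiffOn_xi2 hU hf₂ hf₂0 hb
  have hξc := contDiffOn_xi1 hU hf₁ hf₁0 hc
  intro p hp
  have hcomm := xi1_xi2_sub_xi2_xi1 hU hf₁ hf₂ hΨ hp (hf₁0 p hp) (hf₂0 p hp)
    (hE1 p hp) (hE2 p hp)
  generalize bfun f₂ θ₁ θ₂ = b at *
  generalize cfun f₁ θ₁ θ₂ = c at *
  have hξ₂Ψ : ∀ q ∈ U, xi2 f₂ Ψ q = xi1 f₁ c q + (c q * θ₁ q + θ₂ q * (Ψ q + 2)) := by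
    intro q hq
    have h₁ := hf₁0 q hq
    have h₂ := hf₂0 q hq
    simp only [xi1, xi2]
    field_simp
    linear_combination hE3 q hq
  have hξ₁Ψ : ∀ q ∈ U,
      xi1 f₁ Ψ q = xi2 f₂ b q + (b q * (-θ₂) q + (-θ₁) q * (Ψ q + (-2))) := by
    intro q hq
    have h₁ := hf₁0 q hq
    have h₂ := hf₂0 q hq
    simp only [xi1, xi2, Pi.neg_apply]
    field_simp
    linear_combination hE4 q hq
  have d {g : ℝ × ℝ → ℝ} (hg : ContDiffOn ℝ (⊤ : ℕ∞) g U) : DifferentiableAt ℝ g p :=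
    hg.differentiableAt_of_mem hU hp
  have h12 : xi1 f₁ (xi2 f₂ Ψ) p = xi1 f₁ (xi1 f₁ c) p
      + (c p * xi1 f₁ θ₁ p + θ₁ p * xi1 f₁ c p)
      + (θ₂ p * xi1 f₁ Ψ p + (Ψ p + 2) * xi1 f₁ θ₂ p) := by
    have h := (Filter.eventuallyEq_of_mem (hU.mem_nhds hp) hξ₂Ψ).fderiv_eq (𝕜 := ℝ)
    have h' := fderiv_add_mul_add_mul_add_apply (d hξc) (d hc) (d hθ₁) (d hθ₂) (d hΨ) 2 (1, 0)
    rw [← h] at h'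
    simp only [xi1, pd1] at h' ⊢
    rw [h']
    ring
  have h21 : xi2 f₂ (xi1 f₁ Ψ) p = xi2 f₂ (xi2 f₂ b) p
      - (b p * xi2 f₂ θ₂ p + θ₂ p * xi2 f₂ b p)
      - (θ₁ p * xi2 f₂ Ψ p + (Ψ p - 2) * xi2 f₂ θ₁ p) := by
    have h := (Filter.eventuallyEq_of_mem (hU.mem_nhds hp) hξ₁Ψ).fderiv_eq (𝕜 := ℝ)
    have h' := fderiv_add_mul_add_mul_add_apply (d hξb) (d hb) (d hθ₂).neg (d hθ₁).neg (d hΨ)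
      (-2) (0, 1)
    rw [← h, fderiv_neg, fderiv_neg] at h'
    simp only [xi2, pd2, Pi.neg_apply, neg_apply] at h' ⊢
    rw [h']
    ring
  have h₂ := hξ₂Ψ p hp
  have h₁ := hξ₁Ψ p hp
  simp only [Pi.neg_apply] at h₁
  linear_combination hcomm - h12 + h21 - (3 / 2) * θ₁ p * h₂ - (3 / 2) * θ₂ p * h₁
end

section
/- Let U ⊆ ℝ² be open, and let f₁, f₂, θ₁, θ₂, Ψ : U → ℝ be smooth with f₁, f₂ nowhere zero. Set ξᵢ(g) = (1/fᵢ)∂ᵢg, b = -θ₁θ₂ + ξ₂(θ₁), c = θ₁θ₂ + ξ₁(θ₂), and assume the structural equations (E1) ∂₂f₁ + (1/2)f₁f₂θ₂ = 0, (E2) ∂₁f₂ - (1/2)f₁f₂θ₁ = 0, (E3) f₁∂₂Ψ - f₂∂₁c - f₁f₂(cθ₁ + θ₂(Ψ+2)) = 0, (E4) -f₁∂₂b + f₂∂₁Ψ + f₁f₂(bθ₂ + θ₁(Ψ-2)) = 0 hold on U. Then at every point p ∈ U where ξ₁(θ₂)(p) + ξ₂(θ₁)(p) ≠ 0, the invariant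 Ψ is determined by θ₁ and θ₂: Ψ = (1/(ξ₁(θ₂)+ξ₂(θ₁)))·[ -6θ₁θ₂ + 2(ξ₂(θ₁) - ξ₁(θ₂)) + 4(θ₂²ξ₂(θ₁) - θ₁²ξ₁(θ₂)) - (3/2)(θ₁θ₂³ + θ₂θ₁³) - 3ξ₁(θ₁)ξ₁(θ₂) - 3ξ₂(θ₁)ξ₂(θ₂) + (7/2)θ₁θ₂(ξ₂(θ₂) - ξ₁(θ₁)) - (7/2)(θ₂ξ₂(ξ₂(θ₁)) + θ₁ξ₁(ξ₁(θ₂))) - θ₁ξ₂(ξ₂(θ₂)) - θ₂ξ₁(ξ₁(θ₁)) + ξ₂(ξ₂(ξ₂(θ₁))) - ξ₁(ξ₁(ξ₁(θ₂))) ] at p. -/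
open scoped Topology

/-- The rescaled directional derivative `g ↦ (1/f) ∂ᵥg`. -/
noncomputable def scaledDeriv (v : ℝ × ℝ) (f g : ℝ × ℝ → ℝ) : ℝ × ℝ → ℝ :=
  fun p => (1 / f p) * fderiv ℝ g p v

theorem xi1_eq_scaledDeriv : xi1 = scaledDeriv (1, 0) := rfl

theorem xi2_eq_scaledDeriv : xi2 = scaledDeriv (0, 1) := rfl

section ScaledDeriv

variable {U : Set (ℝ × ℝ)} {v w p : ℝ × ℝ} {f f₁ f₂ g h : ℝ × ℝ → ℝ}

theorem ContDiffOn.fderiv_apply_const_of_isOpen (hU : IsOpen U)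
    (hg : ContDiffOn ℝ (⊤ : ℕ∞) g U) (v : ℝ × ℝ) :
    ContDiffOn ℝ (⊤ : ℕ∞) (fun p => fderiv ℝ g p v) U :=
  (hg.fderiv_of_isOpen hU le_rfl).clm_apply contDiffOn_const

theorem ContDiffOn.scaledDeriv (hU : IsOpen U) (hf : ContDiffOn ℝ (⊤ : ℕ∞) f U)
    (hf0 : ∀ p ∈ U, f p ≠ 0) (hg : ContDiffOn ℝ (⊤ : ℕ∞) g U) :
    ContDiffOn ℝ (⊤ : ℕ∞) (scaledDeriv v f g) U :=
  (contDiffOn_const.div hf hf0).mul (hg.fderiv_apply_const_of_isOpen hU v)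

theorem ContDiffOn.differentiableAt_of_isOpen (hU : IsOpen U)
    (hg : ContDiffOn ℝ (⊤ : ℕ∞) g U) (hp : p ∈ U) : DifferentiableAt ℝ g p :=
  (hg.contDiffAt (hU.mem_nhds hp)).differentiableAt (by simp)

theorem scaledDeriv_congr (hU : IsOpen U) (hgh : ∀ q ∈ U, g q = h q) (hp : p ∈ U) :
    scaledDeriv v f g p = scaledDeriv v f h p := by
  have : g =ᶠ[𝓝 p] h := Filter.eventuallyEq_of_mem (hU.mem_nhds hp) hgh
  simp only [scaledDeriv, this.fderiv_eq]

theorem scaledDeriv_add (hg : DifferentiableAt ℝ g p) (hh : DifferentiableAt ℝ h p) :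
    scaledDeriv v f (fun q => g q + h q) p = scaledDeriv v f g p + scaledDeriv v f h p := by
  simp only [scaledDeriv, fderiv_fun_add hg hh, add_apply]
  ring

theorem scaledDeriv_sub (hg : DifferentiableAt ℝ g p) (hh : DifferentiableAt ℝ h p) :
    scaledDeriv v f (fun q => g q - h q) p = scaledDeriv v f g p - scaledDeriv v f h p := by
  simp only [scaledDeriv, fderiv_fun_sub hg hh, sub_apply]
  ring

theorem scaledDeriv_mul (hg : DifferentiableAt ℝ g p) (hh : DifferentiableAt ℝ h p) :
    scaledDeriv v f (fun q => g q * h q) p =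
      scaledDeriv v f g p * h p + g p * scaledDeriv v f h p := by
  simp only [scaledDeriv, fderiv_fun_mul hg hh, add_apply, smul_apply, smul_eq_mul]
  ring

theorem scaledDeriv_const (a : ℝ) : scaledDeriv v f (fun _ => a) p = 0 := by
  simp [scaledDeriv]

theorem fderiv_scaledDeriv (hU : IsOpen U) (hf : ContDiffOn ℝ (⊤ : ℕ∞) f U)
    (hf0 : ∀ p ∈ U, f p ≠ 0) (hg : ContDiffOn ℝ (⊤ : ℕ∞) g U) (hp : p ∈ U) :
    fderiv ℝ (scaledDeriv w f g) p v =
      (1 / f p) * fderiv ℝ (fderiv ℝ g) p v w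
        - fderiv ℝ f p v / f p * scaledDeriv w f g p := by
  have hF : DifferentiableAt ℝ (fderiv ℝ g) p :=
    ((hg.fderiv_of_isOpen hU (m := (⊤ : ℕ∞)) le_rfl).contDiffAt
      (hU.mem_nhds hp)).differentiableAt (by simp)
  have hS : DifferentiableAt ℝ (scaledDeriv w f g) p :=
    (ContDiffOn.scaledDeriv hU hf hf0 hg).differentiableAt_of_isOpen hU hp
  have hf' : DifferentiableAt ℝ f p := hf.differentiableAt_of_isOpen hU hp
  have hmul : (fun q => f q * scaledDeriv w f g q) =ᶠ[𝓝 p] fun q => fderiv ℝ g q w := by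
    filter_upwards [hU.mem_nhds hp] with q hq
    have := hf0 q hq
    simp only [scaledDeriv]
    field_simp
  have key := congrArg (fun L : ℝ × ℝ →L[ℝ] ℝ => L v) hmul.fderiv_eq
  rw [fderiv_fun_mul hf' hS, fderiv_clm_apply hF (differentiableAt_const w)] at key
  simp at key
  have := hf0 p hp
  field_simp
  linear_combination key

theorem scaledDeriv_commutator (hU : IsOpen U)
    (hf₁ : ContDiffOn ℝ (⊤ : ℕ∞) f₁ U) (hf₂ : ContDiffOn ℝ (⊤ : ℕ∞) f₂ U)
    (hf₁0 : ∀ p ∈ U, f₁ p ≠ 0) (hf₂0 : ∀ p ∈ U, f₂ p ≠ 0)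
    (hg : ContDiffOn ℝ (⊤ : ℕ∞) g U) (hp : p ∈ U) :
    scaledDeriv v f₁ (scaledDeriv w f₂ g) p - scaledDeriv w f₂ (scaledDeriv v f₁ g) p =
      (fderiv ℝ f₁ p w * scaledDeriv v f₁ g p - fderiv ℝ f₂ p v * scaledDeriv w f₂ g p)
        / (f₁ p * f₂ p) := by
  have hsymm : fderiv ℝ (fderiv ℝ g) p v w = fderiv ℝ (fderiv ℝ g) p w v :=
    (hg.contDiffAt (hU.mem_nhds hp)).isSymmSndFDerivAt
      (by simpa using WithTop.coe_le_coe.2 (le_top (a := (2 : ℕ∞)))) v w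
  have h₁ := hf₁0 p hp
  have h₂ := hf₂0 p hp
  rw [scaledDeriv, scaledDeriv.eq_1 w f₂ (scaledDeriv v f₁ g),
    fderiv_scaledDeriv hU hf₂ hf₂0 hg hp, fderiv_scaledDeriv hU hf₁ hf₁0 hg hp, hsymm]
  field_simp
  ring

end ScaledDeriv

/-- Under the structural equations (E1)–(E4), at every point where
`ξ₁(θ₂) + ξ₂(θ₁) ≠ 0`, the invariant Ψ is expressed in terms of θ₁, θ₂ and their
ξ-derivatives by formula (12) of the paper. -/
theorem psi_determined_by_thetas
    (U : Set (ℝ × ℝ)) (hU : IsOpen U)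
    (f₁ f₂ θ₁ θ₂ Ψ : ℝ × ℝ → ℝ)
    (hf₁ : ContDiffOn ℝ (⊤ : ℕ∞) f₁ U) (hf₂ : ContDiffOn ℝ (⊤ : ℕ∞) f₂ U)
    (hθ₁ : ContDiffOn ℝ (⊤ : ℕ∞) θ₁ U) (hθ₂ : ContDiffOn ℝ (⊤ : ℕ∞) θ₂ U)
    (hΨ : ContDiffOn ℝ (⊤ : ℕ∞) Ψ U)
    (hf₁0 : ∀ p ∈ U, f₁ p ≠ 0) (hf₂0 : ∀ p ∈ U, f₂ p ≠ 0)
    (hE1 : ∀ p ∈ U, pd2 f₁ p + (1 / 2) * f₁ p * f₂ p * θ₂ p = 0)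
    (hE2 : ∀ p ∈ U, pd1 f₂ p - (1 / 2) * f₁ p * f₂ p * θ₁ p = 0)
    (hE3 : ∀ p ∈ U, f₁ p * pd2 Ψ p - f₂ p * pd1 (cfun f₁ θ₁ θ₂) p
      - f₁ p * f₂ p * (cfun f₁ θ₁ θ₂ p * θ₁ p + θ₂ p * (Ψ p + 2)) = 0)
    (hE4 : ∀ p ∈ U, -(f₁ p) * pd2 (bfun f₂ θ₁ θ₂) p + f₂ p * pd1 Ψ p
      + f₁ p * f₂ p * (bfun f₂ θ₁ θ₂ p * θ₂ p + θ₁ p * (Ψ p - 2)) = 0) :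
    ∀ p ∈ U, xi1 f₁ θ₂ p + xi2 f₂ θ₁ p ≠ 0 →
      Ψ p = (1 / (xi1 f₁ θ₂ p + xi2 f₂ θ₁ p)) *
        (-6 * θ₁ p * θ₂ p + 2 * (xi2 f₂ θ₁ p - xi1 f₁ θ₂ p)
          + 4 * ((θ₂ p) ^ 2 * xi2 f₂ θ₁ p - (θ₁ p) ^ 2 * xi1 f₁ θ₂ p)
          - (3 / 2) * (θ₁ p * (θ₂ p) ^ 3 + θ₂ p * (θ₁ p) ^ 3)
          - 3 * xi1 f₁ θ₁ p * xi1 f₁ θ₂ p - 3 * xi2 f₂ θ₁ p * xi2 f₂ θ₂ p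
          + (7 / 2) * θ₁ p * θ₂ p * (xi2 f₂ θ₂ p - xi1 f₁ θ₁ p)
          - (7 / 2) * (θ₂ p * xi2 f₂ (xi2 f₂ θ₁) p + θ₁ p * xi1 f₁ (xi1 f₁ θ₂) p)
          - θ₁ p * xi2 f₂ (xi2 f₂ θ₂) p - θ₂ p * xi1 f₁ (xi1 f₁ θ₁) p
          + xi2 f₂ (xi2 f₂ (xi2 f₂ θ₁)) p - xi1 f₁ (xi1 f₁ (xi1 f₁ θ₂)) p) := by
  intro p hp hne
  have sm₁ : ∀ {g}, ContDiffOn ℝ (⊤ : ℕ∞) g U → ContDiffOn ℝ (⊤ : ℕ∞) (xi1 f₁ g) U :=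
    fun hg => ContDiffOn.scaledDeriv hU hf₁ hf₁0 hg
  have sm₂ : ∀ {g}, ContDiffOn ℝ (⊤ : ℕ∞) g U → ContDiffOn ℝ (⊤ : ℕ∞) (xi2 f₂ g) U :=
    fun hg => ContDiffOn.scaledDeriv hU hf₂ hf₂0 hg
  have df : ∀ {g}, ContDiffOn ℝ (⊤ : ℕ∞) g U → ∀ {q}, q ∈ U → DifferentiableAt ℝ g q :=
    fun hg _ hq => hg.differentiableAt_of_isOpen hU hq
  have hc : ContDiffOn ℝ (⊤ : ℕ∞) (cfun f₁ θ₁ θ₂) U := (hθ₁.mul hθ₂).add (sm₁ hθ₂)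
  have hb : ContDiffOn ℝ (⊤ : ℕ∞) (bfun f₂ θ₁ θ₂) U := (hθ₁.neg.mul hθ₂).add (sm₂ hθ₁)
  have bfun_eq : bfun f₂ θ₁ θ₂ = fun q => xi2 f₂ θ₁ q - θ₁ q * θ₂ q := by
    funext q
    simp only [bfun]
    ring
  have hΨ₂ : ∀ q ∈ U, xi2 f₂ Ψ q = xi1 f₁ (cfun f₁ θ₁ θ₂) q
      + cfun f₁ θ₁ θ₂ q * θ₁ q + θ₂ q * (Ψ q + 2) := fun q hq => by
    have h₁ := hf₁0 q hq
    have h₂ := hf₂0 q hq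
    simp only [xi2, xi1.eq_1 f₁ (cfun f₁ θ₁ θ₂)]
    field_simp
    linear_combination hE3 q hq
  have hΨ₁ : ∀ q ∈ U, xi1 f₁ Ψ q = xi2 f₂ (bfun f₂ θ₁ θ₂) q
      - bfun f₂ θ₁ θ₂ q * θ₂ q - θ₁ q * (Ψ q - 2) := fun q hq => by
    have h₁ := hf₁0 q hq
    have h₂ := hf₂0 q hq
    simp only [xi1, xi2.eq_1 f₂ (bfun f₂ θ₁ θ₂)]
    field_simp
    linear_combination hE4 q hq
  have hξ₁c : ∀ q ∈ U, xi1 f₁ (cfun f₁ θ₁ θ₂) q =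
      xi1 f₁ θ₁ q * θ₂ q + θ₁ q * xi1 f₁ θ₂ q + xi1 f₁ (xi1 f₁ θ₂) q := fun q hq =>
    (scaledDeriv_add (df (hθ₁.mul hθ₂) hq) (df (sm₁ hθ₂) hq)).trans
      (congrArg (· + _) (scaledDeriv_mul (df hθ₁ hq) (df hθ₂ hq)))
  have hξ₂b : ∀ q ∈ U, xi2 f₂ (bfun f₂ θ₁ θ₂) q =
      xi2 f₂ (xi2 f₂ θ₁) q - (xi2 f₂ θ₁ q * θ₂ q + θ₁ q * xi2 f₂ θ₂ q) := fun q hq => by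
    rw [bfun_eq]
    exact (scaledDeriv_sub (df (sm₂ hθ₁) hq) (df (hθ₁.mul hθ₂) hq)).trans
      (congrArg (_ - ·) (scaledDeriv_mul (df hθ₁ hq) (df hθ₂ hq)))
  have hξ₁ξ₁c : xi1 f₁ (xi1 f₁ (cfun f₁ θ₁ θ₂)) p =
      xi1 f₁ (xi1 f₁ θ₁) p * θ₂ p + xi1 f₁ θ₁ p * xi1 f₁ θ₂ p
        + (xi1 f₁ θ₁ p * xi1 f₁ θ₂ p + θ₁ p * xi1 f₁ (xi1 f₁ θ₂) p)
        + xi1 f₁ (xi1 f₁ (xi1 f₁ θ₂)) p := by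
    have d₁ := df hθ₁ hp
    have d₂ := df hθ₂ hp
    have e₁ := df (sm₁ hθ₁) hp
    have e₂ := df (sm₁ hθ₂) hp
    have e₃ := df (sm₁ (sm₁ hθ₂)) hp
    rw [xi1_eq_scaledDeriv] at *
    rw [scaledDeriv_congr hU hξ₁c hp,
      scaledDeriv_add ((e₁.fun_mul d₂).fun_add (d₁.fun_mul e₂)) e₃,
      scaledDeriv_add (e₁.fun_mul d₂) (d₁.fun_mul e₂), scaledDeriv_mul e₁ d₂,
      scaledDeriv_mul d₁ e₂]
  have hξ₂ξ₂b : xi2 f₂ (xi2 f₂ (bfun f₂ θ₁ θ₂)) p =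
      xi2 f₂ (xi2 f₂ (xi2 f₂ θ₁)) p
        - (xi2 f₂ (xi2 f₂ θ₁) p * θ₂ p + xi2 f₂ θ₁ p * xi2 f₂ θ₂ p
          + (xi2 f₂ θ₁ p * xi2 f₂ θ₂ p + θ₁ p * xi2 f₂ (xi2 f₂ θ₂) p)) := by
    have d₁ := df hθ₁ hp
    have d₂ := df hθ₂ hp
    have e₁ := df (sm₂ hθ₁) hp
    have e₂ := df (sm₂ hθ₂) hp
    have e₃ := df (sm₂ (sm₂ hθ₁)) hp
    rw [xi2_eq_scaledDeriv] at *
    rw [scaledDeriv_congr hU hξ₂b hp,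
      scaledDeriv_sub e₃ ((e₁.fun_mul d₂).fun_add (d₁.fun_mul e₂)),
      scaledDeriv_add (e₁.fun_mul d₂) (d₁.fun_mul e₂), scaledDeriv_mul e₁ d₂,
      scaledDeriv_mul d₁ e₂]
  have hξ₁ξ₂Ψ : xi1 f₁ (xi2 f₂ Ψ) p = xi1 f₁ (xi1 f₁ (cfun f₁ θ₁ θ₂)) p
      + (xi1 f₁ (cfun f₁ θ₁ θ₂) p * θ₁ p + cfun f₁ θ₁ θ₂ p * xi1 f₁ θ₁ p)
      + (xi1 f₁ θ₂ p * (Ψ p + 2) + θ₂ p * xi1 f₁ Ψ p) := by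
    have d₁ := df hθ₁ hp
    have d₂ := df hθ₂ hp
    have dc := df hc hp
    have dξ := df (sm₁ hc) hp
    have dΨ := df hΨ hp
    have k := differentiableAt_const (𝕜 := ℝ) (x := p) (2 : ℝ)
    rw [xi1_eq_scaledDeriv] at *
    rw [scaledDeriv_congr hU hΨ₂ hp,
      scaledDeriv_add (dξ.fun_add (dc.fun_mul d₁)) (d₂.fun_mul (dΨ.fun_add k)),
      scaledDeriv_add dξ (dc.fun_mul d₁), scaledDeriv_mul dc d₁,
      scaledDeriv_mul d₂ (dΨ.fun_add k), scaledDeriv_add dΨ k, scaledDeriv_const, add_zero]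
  have hξ₂ξ₁Ψ : xi2 f₂ (xi1 f₁ Ψ) p = xi2 f₂ (xi2 f₂ (bfun f₂ θ₁ θ₂)) p
      - (xi2 f₂ (bfun f₂ θ₁ θ₂) p * θ₂ p + bfun f₂ θ₁ θ₂ p * xi2 f₂ θ₂ p)
      - (xi2 f₂ θ₁ p * (Ψ p - 2) + θ₁ p * xi2 f₂ Ψ p) := by
    have d₁ := df hθ₁ hp
    have d₂ := df hθ₂ hp
    have db := df hb hp
    have dξ := df (sm₂ hb) hp
    have dΨ := df hΨ hp
    have k := differentiableAt_const (𝕜 := ℝ) (x := p) (2 : ℝ)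
    rw [xi2_eq_scaledDeriv] at *
    rw [scaledDeriv_congr hU hΨ₁ hp,
      scaledDeriv_sub (dξ.fun_sub (db.fun_mul d₂)) (d₁.fun_mul (dΨ.fun_sub k)),
      scaledDeriv_sub dξ (db.fun_mul d₂), scaledDeriv_mul db d₂,
      scaledDeriv_mul d₁ (dΨ.fun_sub k), scaledDeriv_sub dΨ k, scaledDeriv_const, sub_zero]
  have hcomm : xi1 f₁ (xi2 f₂ Ψ) p - xi2 f₂ (xi1 f₁ Ψ) p =
      -(1 / 2) * (θ₂ p * xi1 f₁ Ψ p + θ₁ p * xi2 f₂ Ψ p) := by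
    have h₁ := hf₁0 p hp
    have h₂ := hf₂0 p hp
    have hf₁' : pd2 f₁ p = -(1 / 2) * f₁ p * f₂ p * θ₂ p := by linear_combination hE1 p hp
    have hf₂' : pd1 f₂ p = (1 / 2) * f₁ p * f₂ p * θ₁ p := by linear_combination hE2 p hp
    have h : xi1 f₁ (xi2 f₂ Ψ) p - xi2 f₂ (xi1 f₁ Ψ) p =
        (pd2 f₁ p * xi1 f₁ Ψ p - pd1 f₂ p * xi2 f₂ Ψ p) / (f₁ p * f₂ p) :=
      scaledDeriv_commutator hU hf₁ hf₂ hf₁0 hf₂0 hΨ hp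
    rw [h, hf₁', hf₂']
    field_simp
    ring
  rw [hξ₁ξ₂Ψ, hξ₂ξ₁Ψ, hξ₁ξ₁c, hξ₂ξ₂b, hΨ₁ p hp, hΨ₂ p hp, hξ₁c p hp, hξ₂b p hp] at hcomm
  simp only [bfun, cfun] at hcomm
  rw [one_div, eq_inv_mul_iff_mul_eq₀ hne]
  linear_combination hcomm
end
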